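/- (Convergence of the iterative optimal polynomial approximation algorithm.) Let S₁,…,S_d be pairwise commuting N×N complex matrices with joint spectrum Λ = {λ_1,…,λ_N}, let h be a multivariate polynomial such that H = h(S₁,…,S_d) is invertible, let L ≥ 0, and let g̃ be a multivariate polynomial of total degree at most L that minimizes max_{1 ≤ i ≤ N} |1 − g(λ_i) h(λ_i)| over all multivariate polynomials g of total degree at most L. Suppose a_L := max_{1 ≤ i ≤ N} |1 − g̃(λ_i) h(λ_i)| < 1. Then for every b ∈ ℂ^N the iterates x⁽ᵐ⁾ of the iterative approximation algorithm with G = g̃(S₁,…,S_d) converge exponentially to H⁻¹ b: for every r with a_L < r < 1 there exists C > 0 such that ‖x⁽ᵐ⁾ − H⁻¹ b‖₂ ≤ C ‖H⁻¹ b‖₂ rᵐ for all m ≥ 1. -/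

import Mathlib

open Matrix

/-- The Euclidean (ℓ²) norm of a vector in ℂ^N. -/
noncomputable def l2norm {N : ℕ} (v : Fin N → ℂ) : ℝ :=
  ‖(EuclideanSpace.equiv (Fin N) ℂ).symm v‖

/-- The polynomial graph filter `h(S₁,…,S_d) = ∑ h_{l₁,…,l_d} S₁^{l₁}⋯S_d^{l_d}` associated with
a multivariate polynomial `h` and matrices `S₁,…,S_d`. -/
noncomputable def polyFilter {N d : ℕ} (S : Fin d → Matrix (Fin N) (Fin N) ℂ)
    (h : MvPolynomial (Fin d) ℂ) : Matrix (Fin N) (Fin N) ℂ :=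
  ∑ m ∈ h.support, h.coeff m • (List.ofFn fun k => S k ^ m k).prod

/-!
If `H y = b`, then `y - x⁽ᵐ⁾ = (1 - G H)ᵐ y`, so the rate of convergence is governed by the spectral
radius of `1 - G H`. After conjugation by `U` both filters are upper triangular, and reading off the
diagonal is an algebra homomorphism on upper triangular matrices; hence the eigenvalues of `1 - G H`
are the numbers `1 - g̃(λᵢ) h(λᵢ)`, and Gelfand's formula bounds its powers by `C rᵐ` for every
`r > a_L`.
-/

section OrderedEval

variable {R A B : Type*} [CommSemiring R] {d : ℕ}

/-- Evaluation of a multivariate polynomial at a tuple in a noncommutative algebra, the powers of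
the variables in each monomial being multiplied in the order of their indices. This is `polyFilter`
over an arbitrary algebra, where it can be transported along algebra homomorphisms. -/
noncomputable def orderedEval [Semiring A] [Algebra R A] (x : Fin d → A)
    (p : MvPolynomial (Fin d) R) : A :=
  ∑ m ∈ p.support, p.coeff m • (List.ofFn fun k => x k ^ m k).prod

theorem map_orderedEval [Semiring A] [Algebra R A] [Semiring B] [Algebra R B] (φ : A →ₐ[R] B)
    (x : Fin d → A) (p : MvPolynomial (Fin d) R) :
    φ (orderedEval x p) = orderedEval (fun k => φ (x k)) p := by
  simp only [orderedEval, map_sum, map_smul, map_list_prod, List.map_ofFn, Function.comp_def,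
    map_pow]

theorem orderedEval_eq_aeval [CommSemiring A] [Algebra R A] (x : Fin d → A)
    (p : MvPolynomial (Fin d) R) : orderedEval x p = MvPolynomial.aeval x p := by
  simp only [orderedEval, List.prod_ofFn, MvPolynomial.aeval_def, MvPolynomial.eval₂_eq',
    Algebra.smul_def]

end OrderedEval

section UpperTriangular

variable {n R K : Type*} [Fintype n] [LinearOrder n]

theorem diag_mul_of_isUpperTriangular [NonUnitalNonAssocSemiring R] {M M' : Matrix n n R}
    (hM : M.IsUpperTriangular) (hM' : M'.IsUpperTriangular) :
    (M * M').diag = M.diag * M'.diag := by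
  ext i
  rw [diag_apply, mul_apply, Finset.sum_eq_single i, Pi.mul_apply, diag_apply, diag_apply]
  · intro j _ hj
    rcases hj.lt_or_gt with hji | hij
    · rw [hM hji, zero_mul]
    · rw [hM' hij, mul_zero]
  · exact fun hi => absurd (Finset.mem_univ i) hi

variable (n R) in
/-- The diagonal, as an algebra homomorphism on upper triangular matrices. Its components are the
characters that produce the points of a joint spectrum. -/
def upperTriangularDiag [CommSemiring R] :
    blockTriangularSubalgebra R R (id : n → n) →ₐ[R] (n → R) where
  toFun M := M.1.diag
  map_one' := diag_one
  map_mul' M M' := diag_mul_of_isUpperTriangular M.2 M'.2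
  map_zero' := diag_zero
  map_add' M M' := diag_add M.1 M'.1
  commutes' c := by
    ext i
    simp [Matrix.algebraMap_matrix_apply]

theorem upperTriangularDiag_orderedEval [CommSemiring R] {d : ℕ}
    (T : Fin d → blockTriangularSubalgebra R R (id : n → n)) (p : MvPolynomial (Fin d) R) (i : n) :
    upperTriangularDiag n R (orderedEval T p) i =
      MvPolynomial.eval (fun k => (T k : Matrix n n R) i i) p := by
  have hi := map_orderedEval ((Pi.evalAlgHom R (fun _ => R) i).comp (upperTriangularDiag n R)) T p
  rwa [orderedEval_eq_aeval, MvPolynomial.aeval_eq_eval] at hi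

theorem spectrum_eq_range_diag_of_isUpperTriangular [Field K] {M : Matrix n n K}
    (hM : M.IsUpperTriangular) : spectrum K M = Set.range M.diag := by
  ext z
  simp [mem_spectrum_iff_isRoot_charpoly, charpoly_of_isUpperTriangular M hM,
    Polynomial.eval_prod, Finset.prod_eq_zero_iff, sub_eq_zero, eq_comm (a := z)]

theorem spectrum_one_sub_orderedEval_mul [Field K] {d : ℕ} (S : Fin d → Matrix n n K)
    (u : (Matrix n n K)ˣ) (htri : ∀ k, (u.val * S k * u⁻¹.val).IsUpperTriangular)
    (g h : MvPolynomial (Fin d) K) :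
    spectrum K (1 - orderedEval S g * orderedEval S h) = Set.range fun i =>
      1 - MvPolynomial.eval (fun k => (u.val * S k * u⁻¹.val) i i) g *
        MvPolynomial.eval (fun k => (u.val * S k * u⁻¹.val) i i) h := by
  let conj := MulSemiringAction.toAlgEquiv K (Matrix n n K) (ConjAct.toConjAct u)
  let T : Fin d → blockTriangularSubalgebra K K (id : n → n) :=
    fun k => ⟨u.val * S k * u⁻¹.val, htri k⟩
  let D := 1 - orderedEval T g * orderedEval T h
  have conj_eval (p : MvPolynomial (Fin d) K) :
      conj (orderedEval S p) = (orderedEval T p).val :=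
    (map_orderedEval conj.toAlgHom S p).trans (map_orderedEval (Subalgebra.val _) T p).symm
  have conj_eq : conj (1 - orderedEval S g * orderedEval S h) = (D : Matrix n n K) := by
    rw [map_sub, map_one, map_mul, conj_eval, conj_eval]
    rfl
  have diag_eq : upperTriangularDiag n K D = fun i =>
      1 - MvPolynomial.eval (fun k => (T k : Matrix n n K) i i) g *
        MvPolynomial.eval (fun k => (T k : Matrix n n K) i i) h := by
    ext i
    simp only [D, map_sub, map_one, map_mul, Pi.sub_apply, Pi.one_apply, Pi.mul_apply,
      upperTriangularDiag_orderedEval]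
  calc spectrum K (1 - orderedEval S g * orderedEval S h)
      = spectrum K (D : Matrix n n K) := by rw [← conj_eq, AlgEquiv.spectrum_eq]
    _ = Set.range (upperTriangularDiag n K D) := spectrum_eq_range_diag_of_isUpperTriangular D.2
    _ = _ := congrArg Set.range diag_eq

end UpperTriangular

section PowerBound

theorem spectralRadius_le_ofReal {𝕜 A : Type*} [NormedField 𝕜] [Ring A] [Algebra 𝕜 A] {a : A}
    {c : ℝ} (ha : ∀ z ∈ spectrum 𝕜 a, ‖z‖ ≤ c) : spectralRadius 𝕜 a ≤ ENNReal.ofReal c :=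
  iSup₂_le fun z hz => by
    rw [← enorm_eq_nnnorm, ← ofReal_norm]
    exact ENNReal.ofReal_le_ofReal (ha z hz)

theorem exists_norm_pow_le_of_spectralRadius_lt {A : Type*} [NormedRing A] [NormedAlgebra ℂ A]
    [CompleteSpace A] {a : A} {r : ℝ} (ha : spectralRadius ℂ a < ENNReal.ofReal r) :
    ∃ C > 0, ∀ m : ℕ, ‖a ^ m‖ ≤ C * r ^ m := by
  have hr : 0 < r := ENNReal.ofReal_pos.1 (bot_le.trans_lt ha)
  have eventually_le : ∀ᶠ m : ℕ in Filter.atTop, ‖a ^ m‖ ≤ 1 * ‖r ^ m‖ := by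
    filter_upwards [(spectrum.pow_norm_pow_one_div_tendsto_nhds_spectralRadius
      a).eventually_lt_const ha, Filter.eventually_ne_atTop 0] with m root_lt hm
    have root_le := ((ENNReal.ofReal_lt_ofReal_iff hr).1 root_lt).le
    calc ‖a ^ m‖ = (‖a ^ m‖ ^ (1 / m : ℝ)) ^ m := by
          rw [one_div, Real.rpow_inv_natCast_pow (norm_nonneg _) hm]
      _ ≤ r ^ m := pow_le_pow_left₀ (by positivity) root_le m
      _ = 1 * ‖r ^ m‖ := by rw [one_mul, Real.norm_of_nonneg (by positivity)]
  obtain ⟨C, hC, norm_le⟩ :=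
    Asymptotics.bound_of_isBigO_nat_atTop (Asymptotics.IsBigO.of_bound 1 eventually_le)
  refine ⟨C, hC, fun m => ?_⟩
  simpa only [norm_norm, norm_pow, Real.norm_of_nonneg hr.le] using
    norm_le (pow_ne_zero m hr.ne')

open scoped Matrix.Norms.L2Operator in
theorem exists_l2norm_pow_mulVec_le {N : ℕ} {M : Matrix (Fin N) (Fin N) ℂ} {r : ℝ}
    (hM : spectralRadius ℂ M < ENNReal.ofReal r) :
    ∃ C > 0, ∀ (m : ℕ) (v : Fin N → ℂ), l2norm (M ^ m *ᵥ v) ≤ C * l2norm v * r ^ m := by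
  obtain ⟨C, hC, norm_le⟩ := exists_norm_pow_le_of_spectralRadius_lt hM
  refine ⟨C, hC, fun m v => ?_⟩
  calc l2norm (M ^ m *ᵥ v) ≤ ‖M ^ m‖ * l2norm v :=
        l2_opNorm_mulVec (M ^ m) ((EuclideanSpace.equiv (Fin N) ℂ).symm v)
    _ ≤ C * r ^ m * l2norm v := mul_le_mul_of_nonneg_right (norm_le m) (norm_nonneg _)
    _ = C * l2norm v * r ^ m := mul_right_comm _ _ _

theorem l2norm_sub_comm {N : ℕ} (v w : Fin N → ℂ) : l2norm (v - w) = l2norm (w - v) := by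
  rw [l2norm, l2norm, map_sub, map_sub, norm_sub_rev]

end PowerBound

/-- The sequences produced by the iterative approximation algorithm for `H y = b` with approximate
inverse `G`: residuals `e`, corrections `z` and approximations `x`. The value `z 0` is not part of
the algorithm and is left free. -/
structure IsIterativeApproximation {n R : Type*} [Fintype n] [Ring R] (G H : Matrix n n R)
    (b : n → R) (e z x : ℕ → n → R) : Prop where
  residual_zero : e 0 = b
  approx_zero : x 0 = 0
  correction_succ : ∀ m, z (m + 1) = G *ᵥ e m
  residual_succ : ∀ m, e (m + 1) = e m - H *ᵥ z (m + 1)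
  approx_succ : ∀ m, x (m + 1) = x m + z (m + 1)

namespace IsIterativeApproximation

variable {n R : Type*} [Fintype n] [Ring R] {G H : Matrix n n R} {b : n → R} {e z x : ℕ → n → R}

theorem residual_eq (hx : IsIterativeApproximation G H b e z x) (m : ℕ) :
    e m = b - H *ᵥ x m := by
  induction m with
  | zero => rw [hx.residual_zero, hx.approx_zero, mulVec_zero, sub_zero]
  | succ m ih => rw [hx.residual_succ, hx.approx_succ, ih, mulVec_add, sub_sub]

theorem sub_approx_eq_pow_mulVec [DecidableEq n] (hx : IsIterativeApproximation G H b e z x)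
    {y : n → R} (hy : H *ᵥ y = b) (m : ℕ) : y - x m = (1 - G * H) ^ m *ᵥ y := by
  induction m with
  | zero => rw [hx.approx_zero, sub_zero, pow_zero, one_mulVec]
  | succ m ih =>
    calc y - x (m + 1) = y - x m - G *ᵥ (H *ᵥ (y - x m)) := by
          rw [hx.approx_succ, hx.correction_succ, hx.residual_eq, ← hy, mulVec_sub H, sub_sub]
      _ = (1 - G * H) *ᵥ (y - x m) := by rw [sub_mulVec, one_mulVec, mulVec_mulVec]
      _ = (1 - G * H) ^ (m + 1) *ᵥ y := by rw [ih, mulVec_mulVec, pow_succ']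

end IsIterativeApproximation

theorem IOPA_exponential_convergence_general {N d : ℕ} (S : Fin d → Matrix (Fin N) (Fin N) ℂ)
    (u : (Matrix (Fin N) (Fin N) ℂ)ˣ)
    (htri : ∀ k, (u.val * S k * u⁻¹.val).IsUpperTriangular)
    (lam : Fin N → Fin d → ℂ)
    (hlam : ∀ i k, lam i k = (u.val * S k * u⁻¹.val) i i)
    (g h : MvPolynomial (Fin d) ℂ) {r : ℝ}
    (hr : ⨆ i, ‖1 - MvPolynomial.eval (lam i) g * MvPolynomial.eval (lam i) h‖ < r) :
    ∃ C > 0, ∀ (b y : Fin N → ℂ) (e z x : ℕ → Fin N → ℂ), polyFilter S h *ᵥ y = b →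
      IsIterativeApproximation (polyFilter S g) (polyFilter S h) b e z x →
      ∀ m, l2norm (x m - y) ≤ C * l2norm y * r ^ m := by
  have spectrum_eq : spectrum ℂ (1 - polyFilter S g * polyFilter S h) = Set.range fun i =>
      1 - MvPolynomial.eval (lam i) g * MvPolynomial.eval (lam i) h := by
    simp only [funext (hlam _)]
    exact spectrum_one_sub_orderedEval_mul S u htri g h
  have spectralRadius_lt :
      spectralRadius ℂ (1 - polyFilter S g * polyFilter S h) < ENNReal.ofReal r := by
    have r_pos : 0 < r := (Real.iSup_nonneg fun _ => norm_nonneg _).trans_lt hr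
    refine (spectralRadius_le_ofReal ?_).trans_lt ((ENNReal.ofReal_lt_ofReal_iff r_pos).2 hr)
    rw [spectrum_eq, Set.forall_mem_range]
    exact le_ciSup (Set.finite_range _).bddAbove
  obtain ⟨C, hC, pow_le⟩ := exists_l2norm_pow_mulVec_le spectralRadius_lt
  refine ⟨C, hC, fun b y e z x hy hx m => ?_⟩
  rw [l2norm_sub_comm, hx.sub_approx_eq_pow_mulVec hy]
  exact pow_le m y

/-- convergence of the IOPA algorithm: if `g̃` is an optimal polynomial of total
degree at most `L` minimizing `max_i |1 − g(λᵢ) h(λᵢ)|`, and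
`a_L = max_i |1 − g̃(λᵢ) h(λᵢ)| < 1`, then for every `r ∈ (a_L, 1)` there is `C > 0` such that
for every `b` the iterates of the iterative approximation algorithm with `G = g̃(S₁,…,S_d)`
satisfy `‖x⁽ᵐ⁾ − H⁻¹ b‖₂ ≤ C ‖H⁻¹ b‖₂ rᵐ` for all `m ≥ 1`. -/
theorem IOPA_exponential_convergence {N d : ℕ} [NeZero N]
    (S : Fin d → Matrix (Fin N) (Fin N) ℂ)
    (hcomm : ∀ k k' : Fin d, Commute (S k) (S k'))
    (U : Matrix (Fin N) (Fin N) ℂ) (hU : U ∈ Matrix.unitaryGroup (Fin N) ℂ)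
    (htri : ∀ k : Fin d, (U * S k * Uᴴ).BlockTriangular (id : Fin N → Fin N))
    (lam : Fin N → Fin d → ℂ)
    (hlam : ∀ (i : Fin N) (k : Fin d), lam i k = (U * S k * Uᴴ) i i)
    (h : MvPolynomial (Fin d) ℂ)
    (H : Matrix (Fin N) (Fin N) ℂ) (hH : H = polyFilter S h) (hinv : IsUnit H)
    (L : ℕ) (gt : MvPolynomial (Fin d) ℂ) (hgtdeg : gt.totalDegree ≤ L)
    (hmin : ∀ g : MvPolynomial (Fin d) ℂ, g.totalDegree ≤ L →
      (⨆ i : Fin N, ‖1 - MvPolynomial.eval (lam i) gt * MvPolynomial.eval (lam i) h‖) ≤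
        ⨆ i : Fin N, ‖1 - MvPolynomial.eval (lam i) g * MvPolynomial.eval (lam i) h‖)
    (aL : ℝ)
    (haL : aL = ⨆ i : Fin N,
      ‖1 - MvPolynomial.eval (lam i) gt * MvPolynomial.eval (lam i) h‖)
    (haL1 : aL < 1) :
    ∀ r : ℝ, aL < r → r < 1 →
      ∃ C : ℝ, 0 < C ∧
        ∀ (b : Fin N → ℂ) (e z x : ℕ → Fin N → ℂ),
          e 0 = b → x 0 = 0 →
          (∀ m : ℕ, z (m + 1) = (polyFilter S gt).mulVec (e m)) →
          (∀ m : ℕ, e (m + 1) = e m - H.mulVec (z (m + 1))) →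
          (∀ m : ℕ, x (m + 1) = x m + z (m + 1)) →
          ∀ m : ℕ, 1 ≤ m →
            l2norm (x m - H⁻¹.mulVec b) ≤ C * l2norm (H⁻¹.mulVec b) * r ^ m := by
  intro r har _
  subst hH
  obtain ⟨C, hC, error_le⟩ := IOPA_exponential_convergence_general S
    (Unitary.toUnits ⟨U, hU⟩) htri lam hlam gt h (haL ▸ har)
  refine ⟨C, hC, fun b e z x he hx hz hes hxs m _ =>
    error_le b _ e z x ?_ ⟨he, hx, hz, hes, hxs⟩ m⟩
  rw [mulVec_mulVec, mul_nonsing_inv _ ((isUnit_iff_isUnit_det _).1 hinv), one_mulVec]
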